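/- arXiv:2407.12596 — 4 statements merged into one kernel-verified Lean document; each statement's English description precedes it below -/
import Mathlib

section
/- Let p be a prime, r ∈ ℕ_{≥1}, R = ℤ/p^rℤ with maximal ideal I = pR. Then for all ℓ ∈ {1, …, r}: σ_2(ℓ) = 1 if ℓ = r and σ_2(ℓ) = 0 otherwise; and σ_4(ℓ) = 0 if ℓ = 1 < r, σ_4(ℓ) = (ℓ−1)(p^r − p^{r−1}) if 1 < ℓ < r, and σ_4(r) = (r−1)p^r − (r−2)p^{r−1}. -/
open Matrix

/-- `η(a)` is the matrix `![![a, -1], ![1, 0]]`. -/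
def eta {R : Type*} [CommRing R] (a : R) : Matrix (Fin 2) (Fin 2) R := !![a, -1; 1, 0]

/-- `[c₁, …, cₙ] = η(c₁)·η(c₂)⋯η(cₙ)`. -/
def prodEta {R : Type*} [CommRing R] {n : ℕ} (c : Fin n → R) : Matrix (Fin 2) (Fin 2) R :=
  (List.ofFn fun i => eta (c i)).prod


/-- `σ_n(ℓ) := |σ_{(-1)^(n/2)+p^ℓ, n}|`: the number of tuples `(c₁, …, cₙ) ∈ Iⁿ`
(`I = pR ⊆ R = ℤ/p^rℤ`) with `[c₁, …, cₙ] = diag(z, z⁻¹)` for `z = (-1)^(n/2) + p^ℓ`. -/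
noncomputable def sigmaCount (p r n ℓ : ℕ) : ℕ :=
  Nat.card {c : Fin n → ZMod (p ^ r) //
    (∀ i, c i ∈ Ideal.span {(p : ZMod (p ^ r))}) ∧
    prodEta c = !![(-1) ^ (n / 2) + (p : ZMod (p ^ r)) ^ ℓ, 0;
                   0, Ring.inverse ((-1) ^ (n / 2) + (p : ZMod (p ^ r)) ^ ℓ)]}

/-!
A solution with `n = 4` is determined by `(-c₁, c₂)`, a pair in `I × I` with product `z - 1 = p^ℓ`.
Sort these pairs `(a, b)` by the valuation `v` of `a`. If `a ≠ 0`, then `a` is associated to `p^v`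
with `1 ≤ v < ℓ`. The unit group acts on the associates of `p^v` with stabilizer `1 + Ann(p^v)`,
while the admissible `b` form a coset of `Ann(a) = Ann(p^v)`, so each `v` contributes exactly `|Rˣ|`
pairs. Pairs with `a = 0` occur only for `ℓ = r`, and there are `|I|` of them. The argument works in
any finite local ring whose maximal ideal is principal.
-/

open IsLocalRing

section EtaProducts

variable {R : Type*} [CommRing R]

/-- The set `σ_{z,n}` of `n`-tuples in the ideal `I` with `[c₁, …, cₙ] = diag(z, z⁻¹)`. As in
`sigmaCount`, the inverse is `Ring.inverse`, which is `0` when `z` is not a unit. -/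
def etaSolutions (I : Ideal R) (z : R) (n : ℕ) : Set (Fin n → R) :=
  {c | (∀ i, c i ∈ I) ∧ prodEta c = !![z, 0; 0, Ring.inverse z]}

/-- The pairs of elements of the ideal `I` with product `t`. -/
def factorPairs (I : Ideal R) (t : R) : Set (R × R) :=
  {ab | ab.1 ∈ I ∧ ab.2 ∈ I ∧ ab.1 * ab.2 = t}

lemma matrix_fin_two_of_inj {α : Type*} {a b c d a' b' c' d' : α} :
    !![a, b; c, d] = !![a', b'; c', d'] ↔ a = a' ∧ b = b' ∧ c = c' ∧ d = d' := by
  simp [and_assoc]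

lemma prodEta_two (c : Fin 2 → R) :
    prodEta c = !![c 0 * c 1 - 1, -c 0; c 1, -1] := by
  simp [prodEta, eta, List.ofFn_succ, sub_eq_add_neg]

lemma prodEta_four (c : Fin 4 → R) :
    prodEta c = !![(c 0 * c 1 - 1) * (c 2 * c 3 - 1) - c 0 * c 3, c 0 - (c 0 * c 1 - 1) * c 2;
      c 1 * (c 2 * c 3 - 1) - c 3, 1 - c 1 * c 2] := by
  have split_in_half : prodEta c = eta (c 0) * eta (c 1) * (eta (c 2) * eta (c 3)) := by
    simp [prodEta, List.ofFn_succ, Matrix.mul_assoc]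
  rw [split_in_half]
  simp only [eta, Matrix.mul_fin_two, matrix_fin_two_of_inj]
  refine ⟨?_, ?_, ?_, ?_⟩ <;> ring

lemma prodEta_two_eq_diag_iff {z : R} {c : Fin 2 → R} :
    prodEta c = !![z, 0; 0, Ring.inverse z] ↔ c = 0 ∧ z = -1 := by
  have inverse_neg_one : Ring.inverse (-1 : R) = -1 := by
    simpa using Ring.inverse_unit (-1 : Rˣ)
  rw [prodEta_two, matrix_fin_two_of_inj, funext_iff, Fin.forall_fin_two]
  constructor
  · rintro ⟨h00, h01, h10, -⟩
    exact ⟨⟨neg_eq_zero.1 h01, h10⟩, by rw [← h00, h10, mul_zero, zero_sub]⟩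
  · rintro ⟨⟨h0, h1⟩, rfl⟩
    simp [h0, h1, inverse_neg_one]

lemma prodEta_four_eq_diag_iff {z : Rˣ} {c : Fin 4 → R} :
    prodEta c = !![(z : R), 0; 0, Ring.inverse (z : R)] ↔
      -c 0 * c 1 = z - 1 ∧ c 2 = -c 0 * ↑z⁻¹ ∧ c 3 = -c 1 * z := by
  have hz : (z : R) * ↑z⁻¹ = 1 := z.mul_inv
  rw [prodEta_four, Ring.inverse_unit, matrix_fin_two_of_inj]
  constructor
  · rintro ⟨-, h01, h10, h11⟩
    have h2 : c 2 = -c 0 * ↑z⁻¹ := by linear_combination h01 - c 0 * h11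
    have h3 : c 3 = -c 1 * z := by
      linear_combination -(z : R) * h10 - c 3 * z * h11 - c 3 * hz
    exact ⟨by linear_combination -z * c 1 * h2 - z * h11 + (c 0 * c 1 - 1) * hz, h2, h3⟩
  · rintro ⟨h01, h2, h3⟩
    rw [h2, h3]
    refine ⟨?_, ?_, ?_, ?_⟩
    · linear_combination (c 0 * c 1 - 1) * (c 0 * c 1 * hz - h01)
    · linear_combination -c 0 * hz - c 0 * ↑z⁻¹ * h01
    · linear_combination c 1 * (c 0 * c 1 * hz - h01)
    · linear_combination -hz - ↑z⁻¹ * h01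

theorem ncard_etaSolutions_two [DecidableEq R] (I : Ideal R) (z : R) :
    (etaSolutions I z 2).ncard = if z = -1 then 1 else 0 := by
  have h : etaSolutions I z 2 = {c | c = 0 ∧ z = -1} := by
    ext c
    simp only [etaSolutions, prodEta_two_eq_diag_iff, Set.mem_ofPred_eq]
    exact ⟨And.right, fun hc ↦ ⟨by simp [hc.1], hc⟩⟩
  rw [h]
  split_ifs with hz <;> simp [hz]

/-- The first two entries of a solution determine the other two. -/
theorem ncard_etaSolutions_four (I : Ideal R) (z : Rˣ) :
    (etaSolutions I (z : R) 4).ncard = (factorPairs I ((z : R) - 1)).ncard := by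
  refine Set.ncard_congr (fun c _ ↦ (-c 0, c 1)) ?_ ?_ ?_
  · rintro c ⟨hI, hc⟩
    exact ⟨I.neg_mem (hI 0), hI 1, (prodEta_four_eq_diag_iff.1 hc).1⟩
  · rintro c d ⟨-, hc⟩ ⟨-, hd⟩ hcd
    obtain ⟨-, hc2, hc3⟩ := prodEta_four_eq_diag_iff.1 hc
    obtain ⟨-, hd2, hd3⟩ := prodEta_four_eq_diag_iff.1 hd
    obtain ⟨h0, h1⟩ := Prod.mk.inj hcd
    funext i
    fin_cases i
    · exact neg_injective h0
    · exact h1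
    · exact hc2.trans (h0 ▸ hd2.symm)
    · exact hc3.trans (h1 ▸ hd3.symm)
  · rintro ⟨a, b⟩ ⟨ha, hb, hab⟩
    refine ⟨![-a, b, a * ↑z⁻¹, -b * z], ⟨?_, prodEta_four_eq_diag_iff.2 ?_⟩, by simp⟩
    · intro i
      fin_cases i
      · exact I.neg_mem ha
      · exact hb
      · exact I.mul_mem_right _ ha
      · exact I.mul_mem_right _ (I.neg_mem hb)
    · simpa using hab

end EtaProducts

section FactorizationsThroughAssociates

lemma ncard_setOf_mem_and_eq_mul {α β : Type*} [Finite α] [Finite β] {s : Set α}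
    {P : α → β → Prop} {n : ℕ} (hP : ∀ a ∈ s, {b | P a b}.ncard = n) :
    {ab : α × β | ab.1 ∈ s ∧ P ab.1 ab.2}.ncard = s.ncard * n := by
  have := Fintype.ofFinite s
  let e : {ab : α × β | ab.1 ∈ s ∧ P ab.1 ab.2} ≃ Σ a : s, {b | P a b} :=
    { toFun ab := ⟨⟨ab.1.1, ab.2.1⟩, ab.1.2, ab.2.2⟩
      invFun ab := ⟨(ab.1, ab.2), ab.1.2, ab.2.2⟩ }
  rw [← Nat.card_coe_set_eq, Nat.card_congr e, Nat.card_sigma]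
  calc ∑ a : s, Nat.card {b | P a b} = ∑ _a : s, n :=
        Finset.sum_congr rfl fun a _ ↦ by rw [Nat.card_coe_set_eq, hP a a.2]
    _ = s.ncard * n := by simp

variable {R : Type*} [CommRing R] {x t : R}

lemma ncard_setOf_mul_eq_of_dvd (h : x ∣ t) :
    {b | x * b = t}.ncard = {b | x * b = 0}.ncard := by
  obtain ⟨s, rfl⟩ := h
  have translate : {b | x * b = x * s} = (· + s) '' {b | x * b = 0} := by
    ext b
    rw [Set.image_add_right, Set.mem_preimage, Set.mem_ofPred_eq, Set.mem_ofPred_eq,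
      ← sub_eq_add_neg, mul_sub, sub_eq_zero]
  rw [translate, Set.ncard_image_of_injective _ (add_left_injective s)]

variable [IsLocalRing R]

/-- The stabilizer of `x ≠ 0` in `Rˣ` is `1 + Ann x`. -/
lemma card_stabilizer_units_eq_ncard_annihilator (hx : x ≠ 0) :
    Nat.card (MulAction.stabilizer Rˣ x) = {k | x * k = 0}.ncard := by
  rw [← Nat.card_coe_set_eq]
  refine Nat.card_congr (Equiv.ofBijective (fun u ↦ ⟨1 - (u : Rˣ), ?_⟩) ⟨?_, ?_⟩)
  · have hu : (u : Rˣ) * x = x := u.2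
    simp only [Set.mem_ofPred_eq]
    linear_combination -hu
  · intro u v huv
    exact Subtype.ext (Units.ext (sub_right_injective (congrArg Subtype.val huv)))
  · rintro ⟨k, hk : x * k = 0⟩
    have hk_nonunit : k ∈ nonunits R := fun hu ↦ hx (hu.mul_left_eq_zero.1 hk)
    obtain ⟨u, hu⟩ := isUnit_one_sub_self_of_mem_nonunits k hk_nonunit
    have hux : u • x = x := by
      rw [Units.smul_def, hu, smul_eq_mul]
      linear_combination -hk
    exact ⟨⟨u, hux⟩, by simp [hu]⟩

lemma ncard_associated_mul_ncard_annihilator (hx : x ≠ 0) :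
    {a | Associated x a}.ncard * {k | x * k = 0}.ncard = Nat.card Rˣ := by
  have orbit_eq : {a | Associated x a} = MulAction.orbit Rˣ x := by
    ext a
    simp [Associated, MulAction.mem_orbit_iff, Units.smul_def, mul_comm x]
  rw [orbit_eq, ← card_stabilizer_units_eq_ncard_annihilator hx, ← Nat.card_coe_set_eq,
    ← Nat.card_prod, Nat.card_congr (MulAction.orbitProdStabilizerEquivGroup Rˣ x)]

/-- Independent of `x` and `t`: passing to a bigger annihilator of `x` gains as many cofactors
as it loses associates. -/
theorem ncard_setOf_associated_and_mul_eq [Finite R] (hx : x ≠ 0) (hxt : x ∣ t) :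
    {ab : R × R | Associated x ab.1 ∧ ab.1 * ab.2 = t}.ncard = Nat.card Rˣ := by
  have cofactors (a : R) (ha : Associated x a) :
      {b | a * b = t}.ncard = {k | x * k = 0}.ncard := by
    rw [ncard_setOf_mul_eq_of_dvd (ha.dvd_iff_dvd_left.1 hxt)]
    obtain ⟨u, rfl⟩ := ha
    simp only [mul_right_comm x, Units.mul_left_eq_zero]
  rw [← ncard_associated_mul_ncard_annihilator hx]
  exact ncard_setOf_mem_and_eq_mul (s := {a | Associated x a}) (P := fun a b ↦ a * b = t) cofactors

end FactorizationsThroughAssociates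

section Uniformizer

variable {R : Type*} [CommRing R] [IsLocalRing R] {π : R} {r : ℕ}

lemma card_units_add_card_maximalIdeal (R : Type*) [CommRing R] [IsLocalRing R] [Finite R] :
    Nat.card Rˣ + Nat.card (maximalIdeal R) = Nat.card R := by
  have units_eq : Nat.card Rˣ = {a : R | IsUnit a}.ncard := by
    rw [← Nat.card_range_of_injective Units.val_injective]
    rfl
  have nonunits_eq : (maximalIdeal R : Set R) = {a : R | IsUnit a}ᶜ := by
    ext a
    simp
  rw [units_eq, ← Set.ncard_add_ncard_compl {a : R | IsUnit a}, ← nonunits_eq]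
  rfl

lemma pow_dvd_or_exists_associated_pow (hπ : maximalIdeal R = Ideal.span {π}) (a : R) (k : ℕ) :
    π ^ k ∣ a ∨ ∃ v < k, Associated (π ^ v) a := by
  induction k with
  | zero => simp
  | succ k ih =>
    obtain ⟨c, rfl⟩ | ⟨v, hv, hva⟩ := ih
    · by_cases hc : IsUnit c
      · exact .inr ⟨k, k.lt_succ_self, hc.unit, rfl⟩
      · have hπc : π ∣ c := by rwa [← Ideal.mem_span_singleton, ← hπ]
        exact .inl (pow_succ π k ▸ mul_dvd_mul_left _ hπc)
    · exact .inr ⟨v, hv.trans k.lt_succ_self, hva⟩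

lemma le_of_pow_dvd_pow (hπ : π ∈ maximalIdeal R) {v w : ℕ} (hw : π ^ w ≠ 0)
    (h : π ^ v ∣ π ^ w) : v ≤ w := by
  by_contra! hwv
  obtain ⟨y, hy⟩ : π ^ (w + 1) ∣ π ^ w := (pow_dvd_pow π hwv).trans h
  have unit : IsUnit (1 - π * y) :=
    isUnit_one_sub_self_of_mem_nonunits _ (Ideal.mul_mem_right y _ hπ)
  exact hw (unit.mul_left_eq_zero.1 (by linear_combination hy))

lemma eq_of_associated_pow_pow (hπ : π ∈ maximalIdeal R) {v w : ℕ} (hv : π ^ v ≠ 0)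
    (h : Associated (π ^ v) (π ^ w)) : v = w :=
  have hw : π ^ w ≠ 0 := h.ne_zero_iff.1 hv
  (le_of_pow_dvd_pow hπ hw h.dvd).antisymm (le_of_pow_dvd_pow hπ hv h.symm.dvd)

lemma factorPairs_fst_ne_zero_eq_biUnion (hπ : maximalIdeal R = Ideal.span {π})
    (hr : ∀ k, π ^ k = 0 ↔ r ≤ k) {ℓ : ℕ} (hℓr : ℓ ≤ r) :
    {ab ∈ factorPairs (Ideal.span {π}) (π ^ ℓ) | ab.1 ≠ 0} =
      ⋃ v ∈ Set.Ico 1 ℓ, {ab | Associated (π ^ v) ab.1 ∧ ab.1 * ab.2 = π ^ ℓ} := by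
  have hπm : π ∈ maximalIdeal R := hπ ▸ Ideal.mem_span_singleton_self π
  ext ⟨a, b⟩
  simp only [factorPairs, Ideal.mem_span_singleton, Set.mem_ofPred_eq, Set.mem_iUnion, Set.mem_Ico,
    exists_prop]
  constructor
  · rintro ⟨⟨hπa, ⟨b, rfl⟩, hab⟩, ha⟩
    obtain hra | ⟨v, hvr, hva⟩ := pow_dvd_or_exists_associated_pow hπ a r
    · rw [(hr r).2 le_rfl, zero_dvd_iff] at hra
      exact absurd hra ha
    have hv_pos : 1 ≤ v := by
      refine Nat.one_le_iff_ne_zero.2 ?_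
      rintro rfl
      exact (mem_maximalIdeal π).1 hπm (isUnit_of_dvd_unit hπa (hva.isUnit (by simp)))
    have hvℓ : v < ℓ := by
      obtain rfl | hℓ := hℓr.eq_or_lt
      · exact hvr
      have h : π ^ (v + 1) ∣ π ^ ℓ := by
        rw [← hab, pow_succ]
        exact mul_dvd_mul hva.dvd (dvd_mul_right π b)
      exact le_of_pow_dvd_pow hπm (by simpa [hr] using hℓ) h
    exact ⟨v, ⟨hv_pos, hvℓ⟩, hva, hab⟩
  · rintro ⟨v, ⟨hv_pos, hvℓ⟩, hva, hab⟩
    have hv : π ^ v ≠ 0 := by simpa [hr] using hvℓ.trans_le hℓr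
    have hπa : π ∣ a := (dvd_pow_self π (Nat.one_le_iff_ne_zero.1 hv_pos)).trans hva.dvd
    refine ⟨⟨hπa, ?_, hab⟩, hva.ne_zero_iff.1 hv⟩
    rw [← Ideal.mem_span_singleton, ← hπ]
    intro hb
    have h : Associated (π ^ v) (π ^ ℓ) :=
      hva.trans (hab ▸ (associated_mul_unit_right a b hb))
    exact hvℓ.ne (eq_of_associated_pow_pow hπm hv h)

variable [Finite R]

lemma ncard_factorPairs_fst_ne_zero (hπ : maximalIdeal R = Ideal.span {π})
    (hr : ∀ k, π ^ k = 0 ↔ r ≤ k) {ℓ : ℕ} (hℓr : ℓ ≤ r) :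
    {ab ∈ factorPairs (Ideal.span {π}) (π ^ ℓ) | ab.1 ≠ 0}.ncard = (ℓ - 1) * Nat.card Rˣ := by
  have hπm : π ∈ maximalIdeal R := hπ ▸ Ideal.mem_span_singleton_self π
  have pow_ne_zero_of_lt {v : ℕ} (hv : v ∈ Set.Ico 1 ℓ) : π ^ v ≠ 0 := by
    simpa [hr] using hv.2.trans_le hℓr
  rw [factorPairs_fst_ne_zero_eq_biUnion hπ hr hℓr,
    (Set.finite_Ico 1 ℓ).ncard_biUnion (fun _ _ ↦ Set.toFinite _) ?disjoint,
    finsum_mem_congr rfl fun v hv ↦ ncard_setOf_associated_and_mul_eq (pow_ne_zero_of_lt hv)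
      (pow_dvd_pow π hv.2.le)]
  case disjoint =>
    intro v hv w _ hvw
    refine Set.disjoint_left.2 fun ab hv' hw' ↦ hvw ?_
    exact eq_of_associated_pow_pow hπm (pow_ne_zero_of_lt hv) (hv'.1.trans hw'.1.symm)
  rw [← Finset.coe_Ico, finsum_mem_coe_finset, Finset.sum_const, Nat.card_Ico, smul_eq_mul]

theorem ncard_factorPairs_pow_of_lt (hπ : maximalIdeal R = Ideal.span {π})
    (hr : ∀ k, π ^ k = 0 ↔ r ≤ k) {ℓ : ℕ} (hℓr : ℓ < r) :
    (factorPairs (Ideal.span {π}) (π ^ ℓ)).ncard = (ℓ - 1) * Nat.card Rˣ := by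
  rw [← ncard_factorPairs_fst_ne_zero hπ hr hℓr.le]
  congr 1
  refine (Set.sep_eq_self_iff_mem_true.2 ?_).symm
  rintro ⟨a, b⟩ ⟨-, -, hab⟩ (rfl : a = 0)
  rw [zero_mul, eq_comm, hr] at hab
  exact hℓr.not_ge hab

theorem ncard_factorPairs_zero (hπ : maximalIdeal R = Ideal.span {π})
    (hr : ∀ k, π ^ k = 0 ↔ r ≤ k) :
    (factorPairs (Ideal.span {π}) 0).ncard =
      (r - 1) * Nat.card Rˣ + Nat.card (Ideal.span {π}) := by
  have hπr : π ^ r = 0 := (hr r).2 le_rfl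
  have fst_ne_zero := ncard_factorPairs_fst_ne_zero hπ hr le_rfl
  rw [hπr] at fst_ne_zero
  have split : factorPairs (Ideal.span {π}) 0 =
      {ab ∈ factorPairs (Ideal.span {π}) 0 | ab.1 ≠ 0} ∪
        Prod.mk 0 '' (Ideal.span {π} : Set R) := by
    ext ⟨a, b⟩
    by_cases ha : a = 0
    · simp [factorPairs, ha]
    · simp [factorPairs, ha, Ne.symm ha]
  rw [split, Set.ncard_union_eq ?disjoint, fst_ne_zero,
    Set.ncard_image_of_injective _ (Prod.mk_right_injective 0), ← Nat.card_coe_set_eq]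
  · rfl
  case disjoint =>
    rw [Set.disjoint_left]
    rintro _ ⟨-, ha⟩ ⟨b, -, rfl⟩
    exact ha rfl

end Uniformizer

section ChainRing

variable {R : Type*} [CommRing R]

/-- The number `σ_n(ℓ)` over a ring in which `π` plays the role of `p`: the number of tuples in
`(π)ⁿ` with `[c₁, …, cₙ] = diag(z, z⁻¹)` for `z = (-1)^(n/2) + π^ℓ`. -/
noncomputable def chainSigmaCount (π : R) (n ℓ : ℕ) : ℕ :=
  (etaSolutions (Ideal.span {π}) ((-1) ^ (n / 2) + π ^ ℓ) n).ncard

lemma chainSigmaCount_two [DecidableEq R] (π : R) (ℓ : ℕ) :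
    chainSigmaCount π 2 ℓ = if π ^ ℓ = 0 then 1 else 0 := by
  simp [chainSigmaCount, ncard_etaSolutions_two]

lemma chainSigmaCount_four [IsLocalRing R] {π : R} (hπ : π ∈ maximalIdeal R) {ℓ : ℕ}
    (hℓ : 1 ≤ ℓ) : chainSigmaCount π 4 ℓ = (factorPairs (Ideal.span {π}) (π ^ ℓ)).ncard := by
  have hπℓ : -π ^ ℓ ∈ maximalIdeal R :=
    neg_mem (Ideal.pow_mem_of_mem _ hπ ℓ hℓ)
  obtain ⟨z, hz⟩ := isUnit_one_sub_self_of_mem_nonunits _ hπℓ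
  have hz' : (-1) ^ (4 / 2) + π ^ ℓ = (z : R) := by
    rw [hz]
    norm_num
  rw [chainSigmaCount, hz', ncard_etaSolutions_four, hz, sub_neg_eq_add, add_sub_cancel_left]

theorem stmt12_general [IsLocalRing R] [Finite R] {π : R}
    (hπ : maximalIdeal R = Ideal.span {π}) {r : ℕ} (hr : ∀ k, π ^ k = 0 ↔ r ≤ k) :
    (∀ ℓ ≤ r, chainSigmaCount π 2 ℓ = if ℓ = r then 1 else 0) ∧
    (∀ ℓ, 1 ≤ ℓ → ℓ < r → (chainSigmaCount π 4 ℓ : ℤ) =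
      ((ℓ : ℤ) - 1) * ((Nat.card R : ℤ) - Nat.card (maximalIdeal R))) ∧
    ((chainSigmaCount π 4 r : ℤ) =
      ((r : ℤ) - 1) * Nat.card R - ((r : ℤ) - 2) * Nat.card (maximalIdeal R)) := by
  classical
  have hπm : π ∈ maximalIdeal R := hπ ▸ Ideal.mem_span_singleton_self π
  have hr_pos : 1 ≤ r := by simpa [Nat.one_le_iff_ne_zero] using hr 0
  have card_units : (Nat.card Rˣ : ℤ) = Nat.card R - Nat.card (maximalIdeal R) := by
    rw [← card_units_add_card_maximalIdeal R]
    push_cast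
    ring
  refine ⟨fun ℓ hℓ ↦ ?_, fun ℓ hℓ hℓr ↦ ?_, ?_⟩
  · simp only [chainSigmaCount_two, hr, hℓ.ge_iff_eq]
  · rw [chainSigmaCount_four hπm hℓ, ncard_factorPairs_pow_of_lt hπ hr hℓr]
    push_cast [hℓ, card_units]
    ring
  · rw [chainSigmaCount_four hπm hr_pos, (hr r).2 le_rfl, ncard_factorPairs_zero hπ hr, ← hπ]
    push_cast [hr_pos, card_units]
    ring

end ChainRing

lemma sigmaCount_eq_chainSigmaCount (p r n ℓ : ℕ) :
    sigmaCount p r n ℓ = chainSigmaCount (p : ZMod (p ^ r)) n ℓ :=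
  rfl

section ZModPrimePow

variable {p : ℕ} [Fact p.Prime] {r : ℕ}

lemma natCast_pow_eq_zero_iff_le (k : ℕ) : (p : ZMod (p ^ r)) ^ k = 0 ↔ r ≤ k := by
  rw [← Nat.cast_pow, ZMod.natCast_eq_zero_iff,
    Nat.pow_dvd_pow_iff_le_right (Fact.out : p.Prime).one_lt]

lemma isLocalRing_zmod_pow (hr : 1 ≤ r) : IsLocalRing (ZMod (p ^ r)) :=
  have : Fact (1 < p ^ r) := ⟨Nat.one_lt_pow (by omega) (Fact.out : p.Prime).one_lt⟩
  IsLocalRing.of_surjective' (PadicInt.toZModPow (p := p) r) (ZMod.ringHom_surjective _)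

lemma maximalIdeal_zmod_pow [IsLocalRing (ZMod (p ^ r))] :
    maximalIdeal (ZMod (p ^ r)) = Ideal.span {(p : ZMod (p ^ r))} := by
  rw [← map_maximalIdeal_of_surjective (PadicInt.toZModPow (p := p) r) (ZMod.ringHom_surjective _),
    PadicInt.maximalIdeal_eq_span_p, Ideal.map_span, Set.image_singleton, map_natCast]

lemma card_maximalIdeal_zmod_pow [IsLocalRing (ZMod (p ^ r))] (hr : 1 ≤ r) :
    Nat.card (maximalIdeal (ZMod (p ^ r))) = p ^ (r - 1) := by
  have hp : p.Prime := Fact.out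
  have h := card_units_add_card_maximalIdeal (ZMod (p ^ r))
  rw [Nat.card_eq_fintype_card, ZMod.card_units_eq_totient, Nat.totient_prime_pow hp hr,
    Nat.card_zmod] at h
  have p_pow : p ^ r = p ^ (r - 1) * (p - 1) + p ^ (r - 1) := by
    rw [← Nat.mul_add_one, Nat.sub_add_cancel hp.one_le, pow_sub_one_mul (by omega)]
  omega

end ZModPrimePow

/-- Base cases: `σ_2(ℓ) = δ_{ℓ,r}`, and the values of `σ_4(ℓ)`. -/
theorem stmt12 (p r : ℕ) (hp : p.Prime) (hr : 1 ≤ r) :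
    (∀ ℓ, 1 ≤ ℓ → ℓ ≤ r → sigmaCount p r 2 ℓ = if ℓ = r then 1 else 0) ∧
    (1 < r → sigmaCount p r 4 1 = 0) ∧
    (∀ ℓ, 1 < ℓ → ℓ < r →
      (sigmaCount p r 4 ℓ : ℤ) = ((ℓ : ℤ) - 1) * ((p : ℤ) ^ r - (p : ℤ) ^ (r - 1))) ∧
    ((sigmaCount p r 4 r : ℤ) =
      ((r : ℤ) - 1) * (p : ℤ) ^ r - ((r : ℤ) - 2) * (p : ℤ) ^ (r - 1)) := by
  have : Fact p.Prime := ⟨hp⟩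
  have := isLocalRing_zmod_pow (p := p) hr
  have general :=
    stmt12_general (maximalIdeal_zmod_pow (p := p) (r := r)) natCast_pow_eq_zero_iff_le
  simp only [card_maximalIdeal_zmod_pow hr, Nat.card_zmod, Nat.cast_pow,
    ← sigmaCount_eq_chainSigmaCount] at general
  obtain ⟨sigma_two, sigma_four, sigma_four_top⟩ := general
  exact ⟨fun ℓ _ ↦ sigma_two ℓ, fun h ↦ by simpa using sigma_four 1 le_rfl h,
    fun ℓ hℓ ↦ sigma_four ℓ hℓ.le, sigma_four_top⟩
end

section
/- Let p be a prime, r ∈ ℕ_{≥2}, and ℓ ∈ {1, …, r−1}. Then μ(ℓ)·(p−2)·p^{r−ℓ−1} + Σ_{j=ℓ+1}^{r} n_j·μ(j) = (ℓ−1)·p^{2r−ℓ} − (2ℓ−3)·p^{2r−ℓ−1} + (ℓ−1)·p^{2r−ℓ−2}. -/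
/-- `μ(j)`. -/
def muF (p r j : ℕ) : ℕ :=
  if j = r then (r - 1) * p ^ r - (r - 2) * p ^ (r - 1) else (p ^ r - p ^ (r - 1)) * (j - 1)

/-- `n_j`. -/
def nF (p r j : ℕ) : ℕ := if j = r then 1 else p ^ (r - j) - p ^ (r - j - 1)

/-!
For `1 ≤ j < r` one has `n_j μ(j) = p^(2r-j-2) (p-1)² (j-1)`, which is `T j - T (j + 1)` for
`T k = p^(2r-k-1) ((k-1) p - (k-2))`. Since `T r = μ(r) = n_r μ(r)`, the sum of `n_j μ(j)` over
`k ≤ j ≤ r` telescopes to `T k`.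
-/

section

variable {p r j k : ℕ}

theorem pow_pred_le_pow (p : ℕ) (hr : 2 ≤ r) : p ^ (r - 1) ≤ p ^ r := by
  rcases p.eq_zero_or_pos with rfl | hp
  · simp [show r - 1 ≠ 0 by omega]
  · exact Nat.pow_le_pow_right hp (Nat.sub_le r 1)

theorem cast_muF_self (p : ℕ) (hr : 2 ≤ r) :
    (muF p r r : ℤ) = (p : ℤ) ^ (r - 1) * (((r : ℤ) - 1) * p - (r - 2)) := by
  have hle : (r - 2) * p ^ (r - 1) ≤ (r - 1) * p ^ r :=
    Nat.mul_le_mul (by omega) (pow_pred_le_pow p hr)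
  rw [muF, if_pos rfl, Nat.cast_sub hle]
  push_cast [Nat.cast_sub hr, Nat.cast_sub (one_le_two.trans hr)]
  rw [← pow_sub_one_mul (by omega : r ≠ 0) (p : ℤ)]
  ring

theorem cast_muF_of_lt (p : ℕ) (hj : 1 ≤ j) (hjr : j < r) :
    (muF p r j : ℤ) = (p : ℤ) ^ (r - 1) * (p - 1) * (j - 1) := by
  rw [muF, if_neg hjr.ne, Nat.cast_mul, Nat.cast_sub (pow_pred_le_pow p (by omega)),
    Nat.cast_sub hj]
  push_cast
  rw [← pow_sub_one_mul (by omega : r ≠ 0) (p : ℤ)]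
  ring

theorem cast_nF_of_lt (hp : 0 < p) (hjr : j < r) :
    (nF p r j : ℤ) = (p : ℤ) ^ (r - j - 1) * (p - 1) := by
  rw [nF, if_neg hjr.ne, Nat.cast_sub (Nat.pow_le_pow_right hp (Nat.sub_le _ 1))]
  push_cast
  rw [← pow_sub_one_mul (by omega : r - j ≠ 0) (p : ℤ)]
  ring

theorem muF_zero_left_of_lt (hj : 1 ≤ j) (hjr : j < r) : muF 0 r j = 0 := by
  simp [muF, hjr.ne, show r ≠ 0 by omega]

theorem muF_one_left_of_lt (hjr : j < r) : muF 1 r j = 0 := by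
  simp [muF, hjr.ne]

theorem cast_nF_mul_muF_of_lt (p : ℕ) (hj : 1 ≤ j) (hjr : j < r) :
    ((nF p r j * muF p r j : ℕ) : ℤ) = (p : ℤ) ^ (2 * r - j - 2) * (p - 1) ^ 2 * (j - 1) := by
  rcases p.eq_zero_or_pos with rfl | hp
  · simp [muF_zero_left_of_lt hj hjr, show 2 * r - j - 2 ≠ 0 by omega]
  · rw [Nat.cast_mul, cast_nF_of_lt hp hjr, cast_muF_of_lt p hj hjr,
      show 2 * r - j - 2 = (r - j - 1) + (r - 1) by omega]
    ring

/-- The truncation in `p - 2` is harmless because `μ(j) = 0` when `p ≤ 1`. -/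
theorem cast_muF_mul_sub_two_of_lt (p : ℕ) (hj : 1 ≤ j) (hjr : j < r) :
    ((muF p r j * (p - 2) : ℕ) : ℤ) = (muF p r j : ℤ) * (p - 2) := by
  match p with
  | 0 => simp [muF_zero_left_of_lt hj hjr]
  | 1 => simp [muF_one_left_of_lt hjr]
  | q + 2 => simp

theorem sum_Icc_nF_mul_muF (p : ℕ) (hr : 2 ≤ r) (hk : 1 ≤ k) (hkr : k ≤ r) :
    ((∑ j ∈ Finset.Icc k r, nF p r j * muF p r j : ℕ) : ℤ) =
      (p : ℤ) ^ (2 * r - k - 1) * (((k : ℤ) - 1) * p - (k - 2)) := by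
  induction hkr using Nat.decreasingInduction with
  | self =>
    rw [Finset.Icc_self, Finset.sum_singleton, nF, if_pos rfl, one_mul, cast_muF_self p hr,
      show 2 * r - r - 1 = r - 1 by omega]
  | of_succ k hkr ih =>
    rw [← Finset.add_sum_Ioc_eq_sum_Icc hkr.le, ← Finset.Icc_add_one_left_eq_Ioc, Nat.cast_add,
      ih (by omega), cast_nF_mul_muF_of_lt p hk hkr,
      show 2 * r - (k + 1) - 1 = 2 * r - k - 2 by omega,
      show 2 * r - k - 1 = 2 * r - k - 2 + 1 by omega]
    push_cast
    ring

end

theorem stmt15_general (p r ℓ : ℕ) (h1 : 1 ≤ ℓ) (h2 : ℓ < r) :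
    ((muF p r ℓ * (p - 2) * p ^ (r - ℓ - 1) +
        ∑ j ∈ Finset.Icc (ℓ + 1) r, nF p r j * muF p r j : ℕ) : ℤ) =
      ((ℓ : ℤ) - 1) * (p : ℤ) ^ (2 * r - ℓ) - (2 * (ℓ : ℤ) - 3) * (p : ℤ) ^ (2 * r - ℓ - 1) +
        ((ℓ : ℤ) - 1) * (p : ℤ) ^ (2 * r - ℓ - 2) := by
  obtain ⟨d, rfl⟩ : ∃ d, r = ℓ + 1 + d := Nat.exists_eq_add_of_le h2
  rw [Nat.cast_add, sum_Icc_nF_mul_muF p (by omega) (by omega) h2, Nat.cast_mul,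
    cast_muF_mul_sub_two_of_lt p h1 h2, cast_muF_of_lt p h1 h2,
    show ℓ + 1 + d - 1 = ℓ + d by omega,
    show ℓ + 1 + d - ℓ - 1 = d by omega,
    show 2 * (ℓ + 1 + d) - (ℓ + 1) - 1 = ℓ + 2 * d by omega,
    show 2 * (ℓ + 1 + d) - ℓ = ℓ + 2 * d + 2 by omega,
    show ℓ + 2 * d + 2 - 1 = ℓ + 2 * d + 1 by omega, Nat.add_sub_cancel]
  push_cast
  ring

/-- For `1 ≤ ℓ ≤ r - 1`:
`μ(ℓ)(p-2)p^(r-ℓ-1) + Σ_{j=ℓ+1}^r n_j μ(j)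
  = (ℓ-1)p^(2r-ℓ) - (2ℓ-3)p^(2r-ℓ-1) + (ℓ-1)p^(2r-ℓ-2)`. -/
theorem stmt15 (p r : ℕ) (hp : p.Prime) (hr : 2 ≤ r) (ℓ : ℕ) (h1 : 1 ≤ ℓ) (h2 : ℓ ≤ r - 1) :
    ((muF p r ℓ * (p - 2) * p ^ (r - ℓ - 1) +
        ∑ j ∈ Finset.Icc (ℓ + 1) r, nF p r j * muF p r j : ℕ) : ℤ) =
      ((ℓ : ℤ) - 1) * (p : ℤ) ^ (2 * r - ℓ) - (2 * (ℓ : ℤ) - 3) * (p : ℤ) ^ (2 * r - ℓ - 1) +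
        ((ℓ : ℤ) - 1) * (p : ℤ) ^ (2 * r - ℓ - 2) :=
  stmt15_general p r ℓ h1 (by omega)
end

section
/- Let p be a prime, s ∈ ℕ_{≥2}, and m ∈ ℕ_{≥3}. Then (as an identity of rational numbers) Σ_{j=2}^{s−1} p^{−j(m−1)}·[j−1]_{p^{m−2}}·(j−1) = (1/(p^{m−2}−1)) · ( ((1−s)p^{4−s−m} + (s−2)p^{3−s−m} + p^{2−m})/(p−1)² − ((1−s)p^{(m−1)(2−s)} + (s−2)p^{(m−1)(1−s)} + 1)/(p^{m−1}−1)² ). -/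
/-!
Put `x = p` and `y = p ^ (m - 2)`, so that `p ^ (m - 1) = x * y`. Since
`[j - 1]_y = (y ^ (j - 1) - 1) / (y - 1)`, each coefficient `(x * y) ^ (-j) * [j - 1]_y` is
`1 / (y - 1)` times a difference of two geometric terms, `y⁻¹ * x ^ (-j) - (x * y) ^ (-j)`. The sum
therefore splits into two arithmetico-geometric sums `∑ (j - 1) * z ^ (-j)`, with `z = x` and
`z = x * y`, each of which has a closed form.
-/

section ClosedForms

variable {K : Type*} [Field K] {x y z : K}

lemma sum_Icc_two_zpow_neg_mul_sub_one (hz₀ : z ≠ 0) (hz₁ : z ≠ 1) (n : ℕ) :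
    ∑ j ∈ Finset.Icc 2 n, z ^ (-(j : ℤ)) * ((j : K) - 1) =
      (-(n : K) * z ^ (1 - (n : ℤ)) + ((n : K) - 1) * z ^ (-(n : ℤ)) + 1) / (z - 1) ^ 2 := by
  have sub_one_ne_zero : z - 1 ≠ 0 := sub_ne_zero.mpr hz₁
  induction n with
  | zero => simp
  | succ n ih =>
    rcases n.eq_zero_or_pos with rfl | n_pos
    · simp
    · rw [Finset.sum_Icc_succ_top (by lia), ih]
      push_cast
      simp only [zpow_add₀ hz₀, zpow_sub₀ hz₀, zpow_neg, zpow_natCast, zpow_one]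
      field_simp
      ring

lemma mul_zpow_neg_mul_geom_sum (hx : x ≠ 0) (hy₀ : y ≠ 0) (hy₁ : y ≠ 1) {j : ℕ} (hj : 1 ≤ j) :
    (x * y) ^ (-(j : ℤ)) * ∑ i ∈ Finset.range (j - 1), y ^ i =
      1 / (y - 1) * (y⁻¹ * x ^ (-(j : ℤ)) - (x * y) ^ (-(j : ℤ))) := by
  have sub_one_ne_zero : y - 1 ≠ 0 := sub_ne_zero.mpr hy₁
  obtain ⟨k, rfl⟩ := Nat.exists_eq_add_of_le' hj
  rw [Nat.add_sub_cancel, geom_sum_eq hy₁]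
  simp only [zpow_neg, zpow_natCast, mul_pow]
  field_simp
  ring

lemma sum_Icc_two_mul_zpow_neg_mul_geom_sum (hx₀ : x ≠ 0) (hx₁ : x ≠ 1) (hy₀ : y ≠ 0)
    (hy₁ : y ≠ 1) (hxy : x * y ≠ 1) (n : ℕ) :
    ∑ j ∈ Finset.Icc 2 n,
        (x * y) ^ (-(j : ℤ)) * (∑ i ∈ Finset.range (j - 1), y ^ i) * ((j : K) - 1) =
      1 / (y - 1) *
        (y⁻¹ * ((-(n : K) * x ^ (1 - (n : ℤ)) + ((n : K) - 1) * x ^ (-(n : ℤ)) + 1) /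
            (x - 1) ^ 2) -
          (-(n : K) * (x * y) ^ (1 - (n : ℤ)) + ((n : K) - 1) * (x * y) ^ (-(n : ℤ)) + 1) /
            (x * y - 1) ^ 2) := by
  rw [← sum_Icc_two_zpow_neg_mul_sub_one hx₀ hx₁ n,
    ← sum_Icc_two_zpow_neg_mul_sub_one (mul_ne_zero hx₀ hy₀) hxy n, Finset.mul_sum,
    ← Finset.sum_sub_distrib, Finset.mul_sum]
  refine Finset.sum_congr rfl fun j hj => ?_
  have one_le_j : 1 ≤ j := one_le_two.trans (Finset.mem_Icc.mp hj).1
  rw [mul_zpow_neg_mul_geom_sum hx₀ hy₀ hy₁ one_le_j]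
  ring

end ClosedForms

theorem stmt16_general {K : Type*} [Field K] {p : K} {m s : ℕ} (hp : p ≠ 0)
    (hpm₂ : p ^ (m - 2) ≠ 1) (hpm₁ : p ^ (m - 1) ≠ 1) (hs : 1 ≤ s) :
    (∑ j ∈ Finset.Icc 2 (s - 1),
        p ^ (-((j : ℤ) * ((m : ℤ) - 1))) *
          (∑ i ∈ Finset.range (j - 1), (p ^ (m - 2)) ^ i) * ((j : K) - 1)) =
      (1 / (p ^ (m - 2) - 1)) *
        (((1 - (s : K)) * p ^ (4 - (s : ℤ) - (m : ℤ)) +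
            ((s : K) - 2) * p ^ (3 - (s : ℤ) - (m : ℤ)) +
            p ^ (2 - (m : ℤ))) / (p - 1) ^ 2 -
          ((1 - (s : K)) * p ^ (((m : ℤ) - 1) * (2 - (s : ℤ))) +
            ((s : K) - 2) * p ^ (((m : ℤ) - 1) * (1 - (s : ℤ))) + 1) /
            (p ^ (m - 1) - 1) ^ 2) := by
  have p_ne_one : p ≠ 1 := by rintro rfl; exact hpm₂ (one_pow _)
  have two_lt_m : 2 < m := by
    by_contra! m_le_two
    exact hpm₂ (by rw [Nat.sub_eq_zero_of_le m_le_two, pow_zero])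
  obtain ⟨n, rfl⟩ := Nat.exists_eq_add_of_le' hs
  have mul_pow_eq : p * p ^ (m - 2) = p ^ (m - 1) := by
    rw [← pow_succ', show m - 2 + 1 = m - 1 by lia]
  have pow_zpow_eq (e : ℤ) : (p ^ (m - 1)) ^ e = p ^ (((m : ℤ) - 1) * e) := by
    rw [← zpow_natCast, ← zpow_mul, Nat.cast_sub (by lia), Nat.cast_one]
  have inv_pow_eq_zpow : (p ^ (m - 2))⁻¹ = p ^ (2 - (m : ℤ)) := by
    rw [← zpow_natCast, ← zpow_neg, Nat.cast_sub (by lia), Nat.cast_ofNat, neg_sub]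
  have closed_form := sum_Icc_two_mul_zpow_neg_mul_geom_sum hp p_ne_one (pow_ne_zero _ hp) hpm₂
    (mul_pow_eq ▸ hpm₁) n
  have zpow_leading : p ^ (4 - ((n + 1 : ℕ) : ℤ) - m) = p ^ (2 - (m : ℤ)) * p ^ (1 - (n : ℤ)) := by
    rw [← zpow_add₀ hp]; congr 1; push_cast; ring
  have zpow_next : p ^ (3 - ((n + 1 : ℕ) : ℤ) - m) = p ^ (2 - (m : ℤ)) * p ^ (-(n : ℤ)) := by
    rw [← zpow_add₀ hp]; congr 1; push_cast; ring
  simp only [mul_pow_eq, inv_pow_eq_zpow, pow_zpow_eq] at closed_form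
  rw [zpow_leading, zpow_next, show 2 - ((n + 1 : ℕ) : ℤ) = 1 - n by lia,
    show 1 - ((n + 1 : ℕ) : ℤ) = -n by lia, Nat.add_sub_cancel]
  simp only [neg_mul_eq_mul_neg, mul_comm _ ((m : ℤ) - 1)]
  rw [closed_form]
  push_cast
  ring

/-- The identity of rational numbers
`Σ_{j=2}^{s-1} p^(-j(m-1)) · [j-1]_{p^(m-2)} · (j-1)
  = (1/(p^(m-2)-1)) · ( ((1-s)p^(4-s-m) + (s-2)p^(3-s-m) + p^(2-m))/(p-1)²
      − ((1-s)p^((m-1)(2-s)) + (s-2)p^((m-1)(1-s)) + 1)/(p^(m-1)-1)² )`. -/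
theorem stmt16 (p : ℕ) (hp : p.Prime) (s : ℕ) (hs : 2 ≤ s) (m : ℕ) (hm : 3 ≤ m) :
    (∑ j ∈ Finset.Icc 2 (s - 1),
        (p : ℚ) ^ (-((j : ℤ) * ((m : ℤ) - 1))) *
          (∑ i ∈ Finset.range (j - 1), ((p : ℚ) ^ (m - 2)) ^ i) * ((j : ℚ) - 1)) =
      (1 / ((p : ℚ) ^ (m - 2) - 1)) *
        (((1 - (s : ℚ)) * (p : ℚ) ^ (4 - (s : ℤ) - (m : ℤ)) +
            ((s : ℚ) - 2) * (p : ℚ) ^ (3 - (s : ℤ) - (m : ℤ)) +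
            (p : ℚ) ^ (2 - (m : ℤ))) / ((p : ℚ) - 1) ^ 2 -
          ((1 - (s : ℚ)) * (p : ℚ) ^ (((m : ℤ) - 1) * (2 - (s : ℤ))) +
            ((s : ℚ) - 2) * (p : ℚ) ^ (((m : ℤ) - 1) * (1 - (s : ℤ))) + 1) /
            ((p : ℚ) ^ (m - 1) - 1) ^ 2) := by
  have one_lt_p : (1 : ℚ) < p := by exact_mod_cast hp.one_lt
  exact stmt16_general (zero_lt_one.trans one_lt_p).ne' (one_lt_pow₀ one_lt_p (by lia)).ne'
    (one_lt_pow₀ one_lt_p (by lia)).ne' (by lia)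
end

section
/- Let p be a prime, r ∈ ℕ_{≥1}, R = ℤ/p^rℤ, and fix a matrix A ∈ M₂(R). For u ∈ R and n ≥ 3 set π_{u,n} := |{(c₁, …, cₙ) ∈ Rⁿ : [c₁, …, cₙ] = A and c₂ = u}|, and set τ_n := Σ_{u ∈ R^×} π_{u,n}. Then for all n ≥ 5: τ_n = (p^r − p^{r−1})·τ_{n−1} + p^{2r−1}·τ_{n−2}. -/
open Matrix

/-!
Let `L` be the operator `(L g)(P) = ∑ a, g (P * η(a))` on functions of a `2 × 2` matrix, so that
`(Lⁿ g)(P)` is the sum of `g (P * [c₁, …, cₙ])` over all `n`-tuples. Write `d(u) = diag(u, u⁻¹)`.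
For a unit `u`, and for `w = x y - 1` a unit,

  `η(a) η(u) η(b) = η(a - u⁻¹) d(u) η(b - u⁻¹)`,
  `η(a) η(x) η(y) η(b) = η(a - y w⁻¹) d(w) η(b - x w⁻¹)`.

After summing over `a` and `b` the translations disappear. The first identity, together with the
fact that averaging over the `d(u)` commutes with `L`, shows `τ_n = (L^(n-1) g)(1)`, where `g`
averages the indicator function of `A` over the `d(u)`. For such a `d`-invariant `g`, split
`(L⁴ g)(P) = ∑ g (P * η(a) η(x) η(y) η(b))` according to `x`: each unit `x` contributes
`(L³ g)(P)` by the first identity. In a local ring `x y - 1` is a unit for each non-unit `x` and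
every `y`, so each such pair `(x, y)` contributes `(L² g)(P)` by the second.
-/

open IsLocalRing

lemma sum_fin_succ_fun {α M : Type*} [Fintype α] [AddCommMonoid M] {n : ℕ}
    (f : (Fin (n + 1) → α) → M) :
    ∑ c, f c = ∑ a : α, ∑ c : Fin n → α, f (Fin.cons a c) := by
  rw [← Equiv.sum_comp (Fin.consEquiv fun _ => α), Fintype.sum_prod_type]
  rfl

section Identities

variable {R : Type*} [CommRing R]

/-- The matrix `diag(u, u⁻¹)` of determinant one attached to a unit `u`, through which a unit
entry of a tuple is eliminated from its `eta`-product. -/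
def unitDiag (u : Rˣ) : Matrix (Fin 2) (Fin 2) R := !![(u : R), 0; 0, (u⁻¹ : Rˣ)]

lemma unitDiag_mul_unitDiag (u v : Rˣ) : unitDiag u * unitDiag v = unitDiag (u * v) := by
  simp [unitDiag, mul_comm]

lemma unitDiag_mul_eta (u : Rˣ) (a : R) :
    unitDiag u * eta (u⁻¹ ^ 2 * a) = eta a * unitDiag u⁻¹ := by
  ext i j
  fin_cases i <;> fin_cases j <;> simp [unitDiag, eta, pow_two, mul_assoc, mul_comm a]

lemma eta_mul_eta_unit_mul_eta (u : Rˣ) (a b : R) :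
    eta a * eta (u : R) * eta b =
      eta (a - (u⁻¹ : Rˣ)) * unitDiag u * eta (b - (u⁻¹ : Rˣ)) := by
  have hu := u.mul_inv
  ext i j
  fin_cases i <;> fin_cases j <;> simp [unitDiag, eta] <;> grind

lemma eta_mul_eta_mul_eta_mul_eta {x y : R} {w : Rˣ} (hw : (w : R) = x * y - 1) (a b : R) :
    eta a * (eta x * eta y) * eta b =
      eta (a - y * (w⁻¹ : Rˣ)) * unitDiag w * eta (b - x * (w⁻¹ : Rˣ)) := by
  have hw' := w.mul_inv
  ext i j
  fin_cases i <;> fin_cases j <;> simp [unitDiag, eta] <;> grind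

lemma prodEta_cons {n : ℕ} (a : R) (c : Fin n → R) :
    prodEta (Fin.cons a c : Fin (n + 1) → R) = eta a * prodEta c := by
  simp [prodEta, List.ofFn_succ]

end Identities

section Operators

variable {R M : Type*} [CommRing R] [AddCommMonoid M] {g : Matrix (Fin 2) (Fin 2) R → M}

/-- The transfer operator `g ↦ (P ↦ ∑ a, g (P * eta a))`. Its iterates sum `g` over all
`eta`-products of a given length. -/
def etaSum [Fintype R] (g : Matrix (Fin 2) (Fin 2) R → M) (P : Matrix (Fin 2) (Fin 2) R) : M :=
  ∑ a : R, g (P * eta a)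

/-- The unnormalised average of `g` over the right translations by `diag(u, u⁻¹)`. -/
def diagSum [Fintype Rˣ] (g : Matrix (Fin 2) (Fin 2) R → M) (P : Matrix (Fin 2) (Fin 2) R) : M :=
  ∑ u : Rˣ, g (P * unitDiag u)

/-- Invariance of `g` under right translation by every `diag(u, u⁻¹)`. -/
def DiagInvariant (g : Matrix (Fin 2) (Fin 2) R → M) : Prop :=
  ∀ P u, g (P * unitDiag u) = g P

lemma diagInvariant_diagSum [Fintype Rˣ] (g : Matrix (Fin 2) (Fin 2) R → M) :
    DiagInvariant (diagSum g) := fun P u => by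
  simp only [diagSum, mul_assoc, unitDiag_mul_unitDiag]
  exact Equiv.sum_comp (Equiv.mulLeft u) fun v => g (P * unitDiag v)

variable [Fintype R]

lemma etaSum_mul_unitDiag (g : Matrix (Fin 2) (Fin 2) R → M) (P : Matrix (Fin 2) (Fin 2) R)
    (u : Rˣ) : etaSum g (P * unitDiag u) = ∑ a : R, g (P * eta a * unitDiag u⁻¹) := by
  rw [etaSum, ← Equiv.sum_comp (Units.mulLeft (u⁻¹ ^ 2))]
  simp only [Units.mulLeft_apply, Units.val_pow_eq_pow_val, mul_assoc, unitDiag_mul_eta]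

lemma DiagInvariant.diagInvariant_etaSum (hg : DiagInvariant g) : DiagInvariant (etaSum g) :=
  fun P u => (etaSum_mul_unitDiag g P u).trans <| Finset.sum_congr rfl fun _ _ => hg _ _

lemma DiagInvariant.diagInvariant_iterate_etaSum (hg : DiagInvariant g) (n : ℕ) :
    DiagInvariant (etaSum^[n] g) := by
  induction n with
  | zero => exact hg
  | succ n ih => rw [Function.iterate_succ_apply']; exact ih.diagInvariant_etaSum

lemma diagSum_commute_etaSum [Fintype Rˣ] :
    Function.Commute (diagSum (R := R) (M := M)) etaSum := fun g => by
  funext P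
  calc diagSum (etaSum g) P
      = ∑ u : Rˣ, ∑ a : R, g (P * eta a * unitDiag u⁻¹) := by
        simp only [diagSum, etaSum_mul_unitDiag]
    _ = ∑ u : Rˣ, ∑ a : R, g (P * eta a * unitDiag u) :=
        Equiv.sum_comp (Equiv.inv Rˣ) fun u => ∑ a : R, g (P * eta a * unitDiag u)
    _ = etaSum (diagSum g) P := Finset.sum_comm

lemma iterate_etaSum_apply (g : Matrix (Fin 2) (Fin 2) R → M) (n : ℕ)
    (P : Matrix (Fin 2) (Fin 2) R) :
    etaSum^[n] g P = ∑ c : Fin n → R, g (P * prodEta c) := by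
  induction n generalizing P with
  | zero => simp [prodEta]
  | succ n ih =>
    rw [Function.iterate_succ_apply', etaSum, sum_fin_succ_fun]
    simp only [ih, prodEta_cons, mul_assoc]

lemma sum_etaSum_congr_of_translate {Q D : Matrix (Fin 2) (Fin 2) R} {s t : R}
    (h : ∀ a b, eta a * Q * eta b = eta (a - s) * D * eta (b - t))
    (g : Matrix (Fin 2) (Fin 2) R → M) (P : Matrix (Fin 2) (Fin 2) R) :
    ∑ a : R, etaSum g (P * eta a * Q) = ∑ a : R, etaSum g (P * eta a * D) := by
  calc ∑ a : R, etaSum g (P * eta a * Q)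
      = ∑ a : R, ∑ b : R, g (P * (eta (a - s) * D * eta (b - t))) := by
        simp only [etaSum, mul_assoc, ← h]
    _ = ∑ a : R, ∑ b : R, g (P * (eta (a - s) * D * eta b)) :=
        Finset.sum_congr rfl fun a _ =>
          Equiv.sum_comp (Equiv.subRight t) fun b => g (P * (eta (a - s) * D * eta b))
    _ = ∑ a : R, ∑ b : R, g (P * (eta a * D * eta b)) :=
        Equiv.sum_comp (Equiv.subRight s) fun a => ∑ b : R, g (P * (eta a * D * eta b))
    _ = ∑ a : R, etaSum g (P * eta a * D) := by simp only [etaSum, mul_assoc]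

lemma sum_etaSum_mul_eta_unit (u : Rˣ) (g : Matrix (Fin 2) (Fin 2) R → M)
    (P : Matrix (Fin 2) (Fin 2) R) :
    ∑ a : R, etaSum g (P * eta a * eta (u : R)) = ∑ a : R, etaSum g (P * eta a * unitDiag u) :=
  sum_etaSum_congr_of_translate (eta_mul_eta_unit_mul_eta u) g P

lemma DiagInvariant.sum_etaSum_mul_unitDiag (hg : DiagInvariant g) (u : Rˣ)
    (P : Matrix (Fin 2) (Fin 2) R) :
    ∑ a : R, etaSum g (P * eta a * unitDiag u) = etaSum^[2] g P :=
  Finset.sum_congr rfl fun a _ => hg.diagInvariant_etaSum (P * eta a) u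

lemma DiagInvariant.sum_etaSum_mul_eta_of_isUnit (hg : DiagInvariant g) {x : R} (hx : IsUnit x)
    (P : Matrix (Fin 2) (Fin 2) R) :
    ∑ a : R, etaSum g (P * eta a * eta x) = etaSum^[2] g P := by
  obtain ⟨u, rfl⟩ := hx
  rw [sum_etaSum_mul_eta_unit, hg.sum_etaSum_mul_unitDiag]

lemma DiagInvariant.sum_etaSum_etaSum_mul_eta (hg : DiagInvariant g) {x : R}
    (hx : ∀ y, IsUnit (x * y - 1)) (P : Matrix (Fin 2) (Fin 2) R) :
    ∑ a : R, etaSum (etaSum g) (P * eta a * eta x) =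
      Nat.card R • etaSum^[2] g P := by
  have sum_eq (y : R) :
      ∑ a : R, etaSum g (P * eta a * (eta x * eta y)) = etaSum^[2] g P := by
    obtain ⟨w, hw⟩ := hx y
    rw [sum_etaSum_congr_of_translate (eta_mul_eta_mul_eta_mul_eta hw),
      hg.sum_etaSum_mul_unitDiag]
  calc ∑ a : R, etaSum (etaSum g) (P * eta a * eta x)
      = ∑ y : R, ∑ a : R, etaSum g (P * eta a * (eta x * eta y)) := by
        rw [Finset.sum_comm]
        simp only [etaSum, mul_assoc]
    _ = Nat.card R • etaSum^[2] g P := by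
        simp only [sum_eq, Finset.sum_const, Finset.card_univ, Nat.card_eq_fintype_card]

end Operators

section LocalRing

variable {R : Type*} [CommRing R] [IsLocalRing R]

lemma isUnit_mul_sub_one_of_not_isUnit {x : R} (hx : ¬ IsUnit x) (y : R) :
    IsUnit (x * y - 1) := by
  have hxy : ¬ IsUnit (x * y) := fun h => hx (isUnit_of_mul_isUnit_left h)
  rw [← neg_sub, IsUnit.neg_iff]
  exact isUnit_one_sub_self_of_mem_nonunits _ hxy

lemma sum_ite_isUnit {M : Type*} [AddCommMonoid M] [Fintype R] (s t : M)
    [DecidablePred (IsUnit (M := R))] :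
    ∑ x : R, (if IsUnit x then s else t) =
      Nat.card Rˣ • s + Nat.card (maximalIdeal R) • t := by
  have card_units : Nat.card Rˣ = Fintype.card {x : R // IsUnit x} := by
    rw [Nat.card_congr Submonoid.unitsTypeEquivIsUnitSubmonoid.toEquiv, ← Nat.card_eq_fintype_card]
    rfl
  have card_maximalIdeal : Nat.card (maximalIdeal R) = Fintype.card {x : R // ¬ IsUnit x} := by
    rw [← Nat.card_eq_fintype_card]
    rfl
  rw [Finset.sum_ite, Finset.sum_const, Finset.sum_const, card_units, card_maximalIdeal,
    Fintype.card_subtype, Fintype.card_subtype]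

lemma natCard_units_add_natCard_maximalIdeal [Finite R] :
    Nat.card Rˣ + Nat.card (maximalIdeal R) = Nat.card R := by
  classical
  have := Fintype.ofFinite R
  simpa only [ite_self, Finset.sum_const, Finset.card_univ, smul_eq_mul, mul_one,
    Nat.card_eq_fintype_card] using (sum_ite_isUnit (R := R) (1 : ℕ) 1).symm

lemma DiagInvariant.iterate_four_etaSum {M : Type*} [AddCommMonoid M] [Fintype R]
    {g : Matrix (Fin 2) (Fin 2) R → M} (hg : DiagInvariant g) (P : Matrix (Fin 2) (Fin 2) R) :
    etaSum^[4] g P = Nat.card Rˣ • etaSum^[3] g P +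
      (Nat.card (maximalIdeal R) * Nat.card R) • etaSum^[2] g P := by
  classical
  have sum_eq (x : R) : ∑ a : R, etaSum (etaSum g) (P * eta a * eta x) =
      if IsUnit x then etaSum^[3] g P else Nat.card R • etaSum^[2] g P := by
    split_ifs with hx
    · exact hg.diagInvariant_etaSum.sum_etaSum_mul_eta_of_isUnit hx P
    · exact hg.sum_etaSum_etaSum_mul_eta (isUnit_mul_sub_one_of_not_isUnit hx) P
  calc etaSum^[4] g P
      = ∑ x : R, ∑ a : R, etaSum (etaSum g) (P * eta a * eta x) := Finset.sum_comm
    _ = _ := by simp only [sum_eq, sum_ite_isUnit, mul_smul]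

lemma DiagInvariant.iterate_etaSum_add_four {M : Type*} [AddCommMonoid M] [Fintype R]
    {g : Matrix (Fin 2) (Fin 2) R → M} (hg : DiagInvariant g) (n : ℕ)
    (P : Matrix (Fin 2) (Fin 2) R) :
    etaSum^[n + 4] g P = Nat.card Rˣ • etaSum^[n + 3] g P +
      (Nat.card (maximalIdeal R) * Nat.card R) • etaSum^[n + 2] g P := by
  simpa only [← Function.iterate_add_apply, add_comm _ n] using
    (hg.diagInvariant_iterate_etaSum n).iterate_four_etaSum P

end LocalRing

section Counting

variable {R : Type*} [CommRing R] [Fintype R]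

lemma natCard_prodEta_eq_and_second_eq (n : ℕ) (A : Matrix (Fin 2) (Fin 2) R) (u : R) :
    Nat.card {c : Fin (n + 2) → R // prodEta c = A ∧ c 1 = u} =
      ∑ a : R, etaSum^[n] (Set.indicator {A} fun _ => 1) (eta a * eta u) := by
  classical
  have second_cons (a b : R) (c : Fin n → R) :
      (Fin.cons a (Fin.cons b c : Fin (n + 1) → R) : Fin (n + 2) → R) 1 = b := rfl
  rw [Nat.card_eq_fintype_card, Fintype.card_subtype, Finset.card_filter, sum_fin_succ_fun]
  refine Finset.sum_congr rfl fun a _ => ?_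
  rw [sum_fin_succ_fun, Finset.sum_comm, iterate_etaSum_apply]
  refine Finset.sum_congr rfl fun c _ => ?_
  simp [second_cons, prodEta_cons, and_comm, ite_and, Set.indicator_apply, mul_assoc]

lemma sum_units_natCard_prodEta_eq [Fintype Rˣ] (n : ℕ) (A : Matrix (Fin 2) (Fin 2) R) :
    ∑ u : Rˣ, Nat.card {c : Fin (n + 3) → R // prodEta c = A ∧ c 1 = (u : R)} =
      etaSum^[n + 2] (diagSum (Set.indicator {A} fun _ => (1 : ℕ))) 1 := by
  set f : Matrix (Fin 2) (Fin 2) R → ℕ := Set.indicator {A} fun _ => 1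
  calc ∑ u : Rˣ, Nat.card {c : Fin (n + 3) → R // prodEta c = A ∧ c 1 = (u : R)}
      = ∑ u : Rˣ, ∑ a : R, etaSum (etaSum^[n] f) (1 * eta a * eta (u : R)) := by
        simp only [natCard_prodEta_eq_and_second_eq, Function.iterate_succ_apply', one_mul, f]
    _ = ∑ u : Rˣ, ∑ a : R, etaSum (etaSum^[n] f) (1 * eta a * unitDiag u) := by
        simp only [sum_etaSum_mul_eta_unit]
    _ = etaSum (diagSum (etaSum^[n + 1] f)) 1 := by
        rw [Finset.sum_comm, Function.iterate_succ_apply']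
        rfl
    _ = etaSum^[n + 2] (diagSum f) 1 := by
        rw [(diagSum_commute_etaSum.iterate_right (n + 1)).eq,
          ← Function.iterate_succ_apply' etaSum]

end Counting

lemma isLocalRing_zmod_prime_pow {p r : ℕ} (hp : p.Prime) (hr : 1 ≤ r) :
    IsLocalRing (ZMod (p ^ r)) := by
  have := Fact.mk hp
  have : Nontrivial (ZMod (p ^ r)) :=
    ZMod.nontrivial_iff.mpr (Nat.one_lt_pow (by omega) hp.one_lt).ne'
  exact IsLocalRing.of_surjective' (PadicInt.toZModPow r) (ZMod.ringHom_surjective _)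

lemma natCard_units_zmod_prime_pow {p r : ℕ} (hp : p.Prime) (hr : 1 ≤ r) :
    Nat.card (ZMod (p ^ r))ˣ = p ^ r - p ^ (r - 1) := by
  have : NeZero (p ^ r) := ⟨pow_ne_zero r hp.ne_zero⟩
  rw [Nat.card_eq_fintype_card, ZMod.card_units_eq_totient, Nat.totient_prime_pow hp hr,
    Nat.mul_sub, mul_one, pow_sub_one_mul (by omega)]

lemma natCard_maximalIdeal_zmod_prime_pow {p r : ℕ} (hp : p.Prime) (hr : 1 ≤ r)
    [IsLocalRing (ZMod (p ^ r))] :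
    Nat.card (maximalIdeal (ZMod (p ^ r))) = p ^ (r - 1) := by
  have : NeZero (p ^ r) := ⟨pow_ne_zero r hp.ne_zero⟩
  have card_add := natCard_units_add_natCard_maximalIdeal (R := ZMod (p ^ r))
  have pow_le : p ^ (r - 1) ≤ p ^ r := Nat.pow_le_pow_right hp.pos (by omega)
  rw [natCard_units_zmod_prime_pow hp hr, Nat.card_zmod] at card_add
  omega

lemma natCard_maximalIdeal_mul_natCard_zmod_prime_pow {p r : ℕ} (hp : p.Prime) (hr : 1 ≤ r)
    [IsLocalRing (ZMod (p ^ r))] :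
    Nat.card (maximalIdeal (ZMod (p ^ r))) * Nat.card (ZMod (p ^ r)) = p ^ (2 * r - 1) := by
  rw [natCard_maximalIdeal_zmod_prime_pow hp hr, Nat.card_zmod, ← pow_add,
    show r - 1 + r = 2 * r - 1 by omega]

theorem stmt19_general {R : Type*} [CommRing R] [IsLocalRing R] [Finite R] [Fintype Rˣ]
    (A : Matrix (Fin 2) (Fin 2) R) (n : ℕ) (hn : 5 ≤ n) :
    (∑ u : Rˣ, Nat.card {c : Fin n → R // prodEta c = A ∧ c ⟨1, by omega⟩ = (u : R)}) =
      Nat.card Rˣ *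
        (∑ u : Rˣ,
          Nat.card {c : Fin (n - 1) → R // prodEta c = A ∧ c ⟨1, by omega⟩ = (u : R)}) +
      Nat.card (maximalIdeal R) * Nat.card R *
        (∑ u : Rˣ,
          Nat.card {c : Fin (n - 2) → R // prodEta c = A ∧ c ⟨1, by omega⟩ = (u : R)}) := by
  have := Fintype.ofFinite R
  obtain ⟨k, rfl⟩ := Nat.exists_eq_add_of_le' hn
  have invariant := diagInvariant_diagSum (Set.indicator {A} fun _ => (1 : ℕ))
  have recurrence := invariant.iterate_etaSum_add_four k 1
  rw [← sum_units_natCard_prodEta_eq (k + 2), ← sum_units_natCard_prodEta_eq (k + 1),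
    ← sum_units_natCard_prodEta_eq k] at recurrence
  exact recurrence

/-- For `R = ℤ/p^rℤ`, a fixed matrix `A`, `π_{u,n}` the number of tuples
`(c₁, …, cₙ) ∈ Rⁿ` with `[c₁, …, cₙ] = A` and `c₂ = u`, and `τ_n := Σ_{u ∈ R^×} π_{u,n}`:
for `n ≥ 5`, `τ_n = (p^r - p^(r-1))·τ_{n-1} + p^(2r-1)·τ_{n-2}`. -/
theorem stmt19 (p r : ℕ) (hp : p.Prime) (hr : 1 ≤ r) [NeZero (p ^ r)]
    (A : Matrix (Fin 2) (Fin 2) (ZMod (p ^ r))) (n : ℕ) (hn : 5 ≤ n) :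
    (∑ u : (ZMod (p ^ r))ˣ,
        Nat.card {c : Fin n → ZMod (p ^ r) // prodEta c = A ∧ c ⟨1, by omega⟩ = (u : ZMod (p ^ r))}) =
      (p ^ r - p ^ (r - 1)) *
        (∑ u : (ZMod (p ^ r))ˣ,
          Nat.card {c : Fin (n - 1) → ZMod (p ^ r) //
            prodEta c = A ∧ c ⟨1, by omega⟩ = (u : ZMod (p ^ r))}) +
      p ^ (2 * r - 1) *
        (∑ u : (ZMod (p ^ r))ˣ,
          Nat.card {c : Fin (n - 2) → ZMod (p ^ r) //
            prodEta c = A ∧ c ⟨1, by omega⟩ = (u : ZMod (p ^ r))}) := by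
  have := isLocalRing_zmod_prime_pow hp hr
  rw [stmt19_general A n hn, natCard_units_zmod_prime_pow hp hr,
    natCard_maximalIdeal_mul_natCard_zmod_prime_pow hp hr]
end
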